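/- The following are equivalent: (1) R is almost coherent; (2) every product ∏_{i∈I} F_i of almost flat R-modules is almost flat; (3) every product of flat R-modules is almost flat; (4) every product of projective R-modules is almost flat; (5) for every index set I, the product ∏_{i∈I} R of copies of R is almost flat. -/

import Mathlib

universe u

open CategoryTheory

/-- A module `F` is almost flat if `Tor₁ᴿ(N, F)` is almost zero for every module `N`. -/
def IsAlmostFlat {R : Type u} [CommRing R] (m : Ideal R)
    (F : Type u) [AddCommGroup F] [Module R F] : Prop :=
  ∀ (N : Type u) [AddCommGroup N] [Module R N],
    ∀ s ∈ m, ∀ x : ((Tor (ModuleCat.{u} R) 1).obj (ModuleCat.of R N)).obj (ModuleCat.of R F),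
      s • x = 0

/-- A module `M` is almost finitely generated (relative to the ideal `m`). -/
def IsAlmostFG {R : Type u} [CommRing R] (m : Ideal R)
    (M : Type u) [AddCommGroup M] [Module R M] : Prop :=
  ∀ s ∈ m, ∃ (n : ℕ) (f : (Fin n → R) →ₗ[R] M), ∀ y : M, s • y ∈ LinearMap.range f

/-- A module `M` is almost finitely presented (relative to the ideal `m`). -/
def IsAlmostFP {R : Type u} [CommRing R] (m : Ideal R)
    (M : Type u) [AddCommGroup M] [Module R M] : Prop :=
  ∀ s ∈ m, ∀ t ∈ m, ∃ (n k : ℕ) (g : (Fin k → R) →ₗ[R] (Fin n → R))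
    (f : (Fin n → R) →ₗ[R] M),
      f ∘ₗ g = 0 ∧ (∀ y : M, s • y ∈ LinearMap.range f) ∧
        (∀ x ∈ LinearMap.ker f, t • x ∈ LinearMap.range g)

/-- `R` is almost coherent: every almost finitely generated ideal is
almost finitely presented. -/
def IsAlmostCoherent {R : Type u} [CommRing R] (m : Ideal R) : Prop :=
  ∀ I : Ideal R, IsAlmostFG m I → IsAlmostFP m I

/-!
The long exact sequence of `Tor` and a filtration of finitely generated modules with cyclic
subquotients reduce almost flatness of `F` to almost injectivity of `I ⊗ F → F` for finitely
generated ideals `I`; here `m² = m` absorbs the factor of `m` lost at each step of the filtration.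

Multiplication by a product of two elements of `m` on an almost finitely presented module `M`
factors through a finitely presented one, for which `M ⊗ ∏ Fᵢ → ∏ (M ⊗ Fᵢ)` is injective. Hence this
map is almost injective for `M = I` if `R` is almost coherent, and almost flatness passes from the
`Fᵢ` to their product.

Conversely, given `φ : Rⁿ → I` with image `J`, almost flatness of `R^(ker φ)` makes
`J ⊗ R^(ker φ) → J^(ker φ)` almost injective. The tensor in `Rⁿ ⊗ R^(ker φ)` with `v`-th component
`v` maps to zero in `J^(ker φ)`, so each of its multiples by `m` comes from `L ⊗ R^(ker φ)` for some
finitely generated `L ≤ ker φ`.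
-/

open scoped TensorProduct

section AlmostInjective

variable {R : Type*} [CommRing R] {m : Ideal R}
  {M M' M'' : Type*} [AddCommGroup M] [Module R M] [AddCommGroup M'] [Module R M']
  [AddCommGroup M''] [Module R M'']

/-- A linear map is almost injective if its kernel is almost zero, that is, annihilated by `m`.
Almost flatness of `F` amounts to `- ⊗ F` turning injections into almost injective maps. -/
def IsAlmostInjective (m : Ideal R) (f : M →ₗ[R] M') : Prop :=
  m ≤ (LinearMap.ker f).annihilator

namespace IsAlmostInjective

theorem iff_smul_eq_zero {f : M →ₗ[R] M'} :
    IsAlmostInjective m f ↔ ∀ s ∈ m, ∀ x, f x = 0 → s • x = 0 :=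
  forall₂_congr fun _ _ => Submodule.mem_annihilator

theorem smul_eq_zero {f : M →ₗ[R] M'} (h : IsAlmostInjective m f) {s : R} (hs : s ∈ m) {x : M}
    (hx : f x = 0) : s • x = 0 :=
  iff_smul_eq_zero.1 h s hs x hx

theorem of_mul_smul_eq_zero (hm : m * m = m) {f : M →ₗ[R] M'}
    (h : ∀ s ∈ m, ∀ t ∈ m, ∀ x, f x = 0 → (s * t) • x = 0) : IsAlmostInjective m f := by
  rw [IsAlmostInjective, ← hm, Ideal.mul_le]
  exact fun s hs t ht => Submodule.mem_annihilator.2 (h s hs t ht)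

theorem of_injective {f : M →ₗ[R] M'} (hf : Function.Injective f) : IsAlmostInjective m f := by
  rw [IsAlmostInjective, LinearMap.ker_eq_bot.2 hf, Submodule.annihilator_bot]
  exact le_top

theorem of_comp {f : M →ₗ[R] M'} {g : M' →ₗ[R] M''} (h : IsAlmostInjective m (g ∘ₗ f)) :
    IsAlmostInjective m f :=
  h.trans (Submodule.annihilator_mono (LinearMap.ker_le_ker_comp f g))

theorem injective_comp {f : M →ₗ[R] M'} {g : M' →ₗ[R] M''} (hg : Function.Injective g)
    (hf : IsAlmostInjective m f) : IsAlmostInjective m (g ∘ₗ f) := by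
  rwa [IsAlmostInjective, LinearMap.ker_comp_of_ker_eq_bot f (LinearMap.ker_eq_bot.2 hg)]

theorem comp (hm : m * m = m) {f : M →ₗ[R] M'} {g : M' →ₗ[R] M''} (hg : IsAlmostInjective m g)
    (hf : IsAlmostInjective m f) : IsAlmostInjective m (g ∘ₗ f) :=
  of_mul_smul_eq_zero hm fun s hs t ht x hx => by
    rw [mul_smul]
    refine hf.smul_eq_zero hs ?_
    rw [map_smul]
    exact hg.smul_eq_zero ht hx

theorem piMap {ι : Type*} {A B : ι → Type*} [∀ i, AddCommGroup (A i)] [∀ i, Module R (A i)]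
    [∀ i, AddCommGroup (B i)] [∀ i, Module R (B i)] {f : ∀ i, A i →ₗ[R] B i}
    (hf : ∀ i, IsAlmostInjective m (f i)) : IsAlmostInjective m (LinearMap.piMap f) :=
  iff_smul_eq_zero.2 fun _ hs _ hx =>
    funext fun i => (hf i).smul_eq_zero hs (congrFun hx i)

theorem lTensor_iff_rTensor (f : M →ₗ[R] M') :
    IsAlmostInjective m (f.lTensor M'') ↔ IsAlmostInjective m (f.rTensor M'') := by
  simp only [iff_smul_eq_zero, ← LinearMap.comm_comp_rTensor_comp_comm_eq f,
    (TensorProduct.comm R M'' M).toEquiv.forall_congr_left]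
  simp [← map_smul]

end IsAlmostInjective

end AlmostInjective

section Tensor

variable {R : Type*} [CommRing R] {m : Ideal R}
  {M₁ M₂ M₃ N₁ N₂ N₃ : Type*}
  [AddCommGroup M₁] [Module R M₁] [AddCommGroup M₂] [Module R M₂] [AddCommGroup M₃] [Module R M₃]
  [AddCommGroup N₁] [Module R N₁] [AddCommGroup N₂] [Module R N₂] [AddCommGroup N₃] [Module R N₃]
  {f₁ : M₁ →ₗ[R] M₂} {f₂ : M₂ →ₗ[R] M₃} {g₁ : N₁ →ₗ[R] N₂} {g₂ : N₂ →ₗ[R] N₃}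

theorem lTensor_rTensor_apply_comm (f : M₁ →ₗ[R] M₂) (g : N₁ →ₗ[R] N₂) (x : M₁ ⊗[R] N₁) :
    g.lTensor M₂ (f.rTensor N₁ x) = f.rTensor N₂ (g.lTensor M₁ x) := by
  rw [← LinearMap.comp_apply, ← LinearMap.comp_apply, LinearMap.lTensor_comp_rTensor,
    LinearMap.rTensor_comp_lTensor]

namespace IsAlmostInjective

theorem lTensor_of_rTensor (hf : Function.Exact f₁ f₂) (hf₂ : Function.Surjective f₂)
    (hg : Function.Exact g₁ g₂) (hg₂ : Function.Surjective g₂)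
    (hg₁ : Function.Injective (g₁.lTensor M₂)) (h : IsAlmostInjective m (f₁.rTensor N₃)) :
    IsAlmostInjective m (g₁.lTensor M₃) := by
  refine iff_smul_eq_zero.2 fun s hs z hz => ?_
  obtain ⟨x, rfl⟩ := f₂.rTensor_surjective N₁ hf₂ z
  rw [lTensor_rTensor_apply_comm] at hz
  obtain ⟨y, hy⟩ := (rTensor_exact N₂ hf hf₂ _).1 hz
  have hsy : g₂.lTensor M₁ (s • y) = 0 := by
    rw [map_smul]
    refine h.smul_eq_zero hs ?_
    rw [← lTensor_rTensor_apply_comm, hy, (lTensor_exact M₂ hg hg₂).apply_apply_eq_zero]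
  obtain ⟨w, hw⟩ := (lTensor_exact M₁ hg hg₂ _).1 hsy
  have hx : s • x = f₁.rTensor N₁ w := hg₁ <| by
    rw [lTensor_rTensor_apply_comm, hw, map_smul, map_smul, hy]
  rw [← map_smul, hx, (rTensor_exact N₁ hf hf₂).apply_apply_eq_zero]

theorem lTensor_of_exact (hm : m * m = m) (hf : Function.Exact f₁ f₂)
    (hf₂ : Function.Surjective f₂) (hf₁ : Function.Injective (f₁.rTensor N₂))
    (h₁ : IsAlmostInjective m (g₁.lTensor M₁)) (h₃ : IsAlmostInjective m (g₁.lTensor M₃)) :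
    IsAlmostInjective m (g₁.lTensor M₂) := by
  refine of_mul_smul_eq_zero hm fun s hs t ht x hx => ?_
  obtain ⟨y, hy⟩ : ∃ y, f₁.rTensor N₁ y = t • x := by
    refine (rTensor_exact N₁ hf hf₂ _).1 ?_
    rw [map_smul]
    refine h₃.smul_eq_zero ht ?_
    rw [lTensor_rTensor_apply_comm, hx, map_zero]
  have hsy : s • y = 0 := by
    refine h₁.smul_eq_zero hs (hf₁ ?_)
    rw [← lTensor_rTensor_apply_comm, hy, map_smul, hx, smul_zero, map_zero]
  rw [mul_smul, ← hy, ← map_smul, hsy, map_zero]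

theorem lTensor_of_forall_fg [Module.Flat R N₂]
    (h : ∀ L : Submodule R M₁, L.FG → IsAlmostInjective m (g₁.lTensor L)) :
    IsAlmostInjective m (g₁.lTensor M₁) := by
  refine iff_smul_eq_zero.2 fun s hs x hx => ?_
  obtain ⟨L, hL, y, rfl⟩ := Submodule.exists_fg_le_eq_rTensor_subtype x
  rw [lTensor_rTensor_apply_comm] at hx
  have hy : g₁.lTensor L y = 0 :=
    Module.Flat.rTensor_preserves_injective_linearMap _ L.subtype_injective
      (hx.trans (map_zero _).symm)
  rw [← map_smul, (h L hL).smul_eq_zero hs hy, map_zero]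

end IsAlmostInjective

end Tensor

section Cyclic

universe v

variable {R : Type*} [CommRing R] {m : Ideal R} {N₁ N₂ : Type*} [AddCommGroup N₁] [Module R N₁]
  [AddCommGroup N₂] [Module R N₂] {g : N₁ →ₗ[R] N₂}

theorem exists_surjective_quotient_sup_span_singleton {M : Type*} [AddCommGroup M] [Module R M]
    (L : Submodule R M) (x : M) :
    ∃ q : R →ₗ[R] (↥(L ⊔ R ∙ x) ⧸ L.submoduleOf (L ⊔ R ∙ x)), Function.Surjective q := by
  have hx : x ∈ L ⊔ R ∙ x := Submodule.mem_sup_right (Submodule.mem_span_singleton_self x)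
  refine ⟨Submodule.mkQ _ ∘ₗ LinearMap.toSpanSingleton R _ ⟨x, hx⟩, fun y => ?_⟩
  obtain ⟨⟨y, hy⟩, rfl⟩ := Submodule.mkQ_surjective _ y
  obtain ⟨l, hl, z, hz, rfl⟩ := Submodule.mem_sup.1 hy
  obtain ⟨r, rfl⟩ := Submodule.mem_span_singleton.1 hz
  refine ⟨r, (Submodule.Quotient.eq _).2 ?_⟩
  simpa [Submodule.submoduleOf] using hl

theorem IsAlmostInjective.lTensor_of_forall_cyclic (hm : m * m = m) [Module.Flat R N₂]
    (h : ∀ (Q : Type v) [AddCommGroup Q] [Module R Q] (q : R →ₗ[R] Q), Function.Surjective q →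
      IsAlmostInjective m (g.lTensor Q))
    (M : Type v) [AddCommGroup M] [Module R M] : IsAlmostInjective m (g.lTensor M) := by
  refine lTensor_of_forall_fg fun L hL => ?_
  induction L, hL using Submodule.fg_sup_span_induction with
  | bot => exact h _ 0 fun y => ⟨0, Subsingleton.elim _ _⟩
  | sup L x _ ih =>
    obtain ⟨q, hq⟩ := exists_surjective_quotient_sup_span_singleton L x
    refine lTensor_of_exact hm (f₁ := Submodule.inclusion le_sup_left)
      (f₂ := (L.submoduleOf (L ⊔ R ∙ x)).mkQ) ?_ (Submodule.mkQ_surjective _)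
      (Module.Flat.rTensor_preserves_injective_linearMap _ (Submodule.inclusion_injective _))
      ih (h _ q hq)
    rw [LinearMap.exact_iff, Submodule.ker_mkQ, Submodule.range_inclusion]
    rfl

end Cyclic

section Tor

theorem annihilator_homology_eq_annihilator_ker {R : Type*} [CommRing R]
    (S : ShortComplex (ModuleCat R)) {C : Type*} [AddCommGroup C] [Module R C]
    {e : S.X₂ →ₗ[R] C} {j : C →ₗ[R] S.X₃} (hS : Function.Exact S.f.hom e)
    (he : Function.Surjective e) (hj : j ∘ₗ e = S.g.hom) :
    Module.annihilator R S.homology = (LinearMap.ker j).annihilator := by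
  ext s
  have hg (z : S.X₂) : S.g.hom z = j (e z) := by rw [← hj, LinearMap.comp_apply]
  have mem_range (z : LinearMap.ker S.g.hom) :
      s • z ∈ LinearMap.range S.moduleCatToCycles ↔ s • e z = 0 := by
    rw [← map_smul, hS (s • z.1)]
    exact exists_congr fun w => Subtype.ext_iff
  rw [S.moduleCatHomologyIso.toLinearEquiv.annihilator_eq]
  change s ∈ Module.annihilator R (_ ⧸ LinearMap.range S.moduleCatToCycles) ↔ _
  rw [Submodule.annihilator_quotient, Submodule.mem_colon, Submodule.mem_annihilator, he.forall]
  simp [mem_range, hg]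

variable {R : Type u} [CommRing R] {m : Ideal R} {F : Type u} [AddCommGroup F] [Module R F]

theorem annihilator_tor_one (P : ProjectiveResolution (ModuleCat.of R F)) (N : Type u)
    [AddCommGroup N] [Module R N] :
    Module.annihilator R
        (((Tor (ModuleCat.{u} R) 1).obj (ModuleCat.of R N)).obj (ModuleCat.of R F)) =
      (LinearMap.ker ((LinearMap.ker (P.π.f 0).hom).subtype.lTensor N)).annihilator := by
  let tensorN := (MonoidalCategory.tensoringLeft (ModuleCat.{u} R)).obj (ModuleCat.of R N)
  let C := (tensorN.mapHomologicalComplex _).obj P.complex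
  let torIso : ((Tor (ModuleCat.{u} R) 1).obj (ModuleCat.of R N)).obj (ModuleCat.of R F) ≅
      (C.sc' 2 1 0).homology :=
    P.isoLeftDerivedObj tensorN 1 ≪≫
      ShortComplex.homologyMapIso (C.isoSc' 2 1 0 (by simp) (by simp))
  have exact_d₂_d₁ : Function.Exact (P.complex.d 2 1).hom (P.complex.d 1 0).hom :=
    (ShortComplex.ShortExact.moduleCat_exact_iff_function_exact _).1 (P.exact_succ 0)
  have exact_d₁_π : Function.Exact (P.complex.d 1 0).hom (P.π.f 0).hom :=
    (ShortComplex.ShortExact.moduleCat_exact_iff_function_exact _).1 P.exact₀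
  let e : P.complex.X 1 →ₗ[R] LinearMap.ker (P.π.f 0).hom :=
    (P.complex.d 1 0).hom.codRestrict _ exact_d₁_π.apply_apply_eq_zero
  have e_surjective : Function.Surjective e := fun y =>
    ((exact_d₁_π y).1 y.2).imp fun _ => Subtype.ext
  have exact_d₂_e : Function.Exact (P.complex.d 2 1).hom e := fun x =>
    Subtype.ext_iff.trans (exact_d₂_d₁ x)
  have exact_lTensor : Function.Exact ((P.complex.d 2 1).hom.lTensor N) (e.lTensor N) :=
    lTensor_exact N exact_d₂_e e_surjective
  have comp_lTensor : (LinearMap.ker (P.π.f 0).hom).subtype.lTensor N ∘ₗ e.lTensor N =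
      (P.complex.d 1 0).hom.lTensor N := by
    rw [← LinearMap.lTensor_comp]
    rfl
  exact torIso.toLinearEquiv.annihilator_eq.trans <|
    annihilator_homology_eq_annihilator_ker (C.sc' 2 1 0) exact_lTensor
      (e.lTensor_surjective N e_surjective) comp_lTensor

theorem isAlmostFlat_iff_lTensor_ker (P : ProjectiveResolution (ModuleCat.of R F)) :
    IsAlmostFlat m F ↔ ∀ (N : Type u) [AddCommGroup N] [Module R N],
      IsAlmostInjective m ((LinearMap.ker (P.π.f 0).hom).subtype.lTensor N) := by
  simp only [IsAlmostInjective, ← annihilator_tor_one P]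
  simp only [IsAlmostFlat, SetLike.le_def, Module.mem_annihilator]

end Tor

section Flat

variable {R : Type u} [CommRing R] {m : Ideal R} {F : Type u} [AddCommGroup F] [Module R F]

theorem flat_projectiveResolution_X {M : ModuleCat.{u} R} (P : ProjectiveResolution M) (n : ℕ) :
    Module.Flat R (P.complex.X n) :=
  have : Module.Projective R (P.complex.X n) :=
    (IsProjective.iff_projective (R := R) _).2 (P.projective n)
  inferInstance

theorem projectiveResolution_π_surjective {M : ModuleCat.{u} R} (P : ProjectiveResolution M) :
    Function.Surjective (P.π.f 0).hom :=
  (ModuleCat.epi_iff_surjective (P.π.f 0)).1 inferInstance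

theorem isAlmostFlat_iff_rTensor_of_injective :
    IsAlmostFlat m F ↔ ∀ (A B : Type u) [AddCommGroup A] [Module R A] [AddCommGroup B]
      [Module R B] (f : A →ₗ[R] B), Function.Injective f → IsAlmostInjective m (f.rTensor F) := by
  let P := projectiveResolution (ModuleCat.of R F)
  have := flat_projectiveResolution_X P 0
  rw [isAlmostFlat_iff_lTensor_ker P]
  refine ⟨fun h A B _ _ _ _ f hf => ?_, fun h N _ _ => ?_⟩
  · rw [← IsAlmostInjective.lTensor_iff_rTensor]
    exact .lTensor_of_rTensor (P.π.f 0).hom.exact_subtype_ker_map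
      (projectiveResolution_π_surjective P) (LinearMap.exact_map_mkQ_range f)
      (Submodule.mkQ_surjective _) (Module.Flat.lTensor_preserves_injective_linearMap f hf)
      (IsAlmostInjective.lTensor_iff_rTensor _ |>.1 (h _))
  · exact .lTensor_of_rTensor (Finsupp.linearCombination R (id : N → N)).exact_subtype_ker_map
      (Finsupp.linearCombination_id_surjective R N) (P.π.f 0).hom.exact_subtype_ker_map
      (projectiveResolution_π_surjective P)
      (Module.Flat.lTensor_preserves_injective_linearMap _ (Submodule.subtype_injective _))
      (h _ _ _ (Submodule.subtype_injective _))

theorem isAlmostFlat_of_flat [Module.Flat R F] : IsAlmostFlat m F :=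
  isAlmostFlat_iff_rTensor_of_injective.2 fun _ _ _ _ _ _ f hf =>
    .of_injective (Module.Flat.rTensor_preserves_injective_linearMap f hf)

theorem IsAlmostInjective.rTensor_ideal_of_forall_fg
    (h : ∀ I : Ideal R, I.FG → IsAlmostInjective m (I.subtype.rTensor F)) (I : Ideal R) :
    IsAlmostInjective m (I.subtype.rTensor F) := by
  refine iff_smul_eq_zero.2 fun s hs x hx => ?_
  obtain ⟨J, hJ, hJI, y, rfl⟩ := Submodule.exists_fg_le_eq_rTensor_inclusion x
  have hy : J.subtype.rTensor F y = 0 := by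
    rwa [← LinearMap.rTensor_comp_apply] at hx
  rw [← map_smul, (h J hJ).smul_eq_zero hs hy, map_zero]

theorem isAlmostFlat_iff_rTensor_fg_ideal (hm : m * m = m) :
    IsAlmostFlat m F ↔ ∀ I : Ideal R, I.FG → IsAlmostInjective m (I.subtype.rTensor F) := by
  refine ⟨fun h I _ => isAlmostFlat_iff_rTensor_of_injective.1 h _ _ _ I.subtype_injective,
    fun h => ?_⟩
  let P := projectiveResolution (ModuleCat.of R F)
  have := flat_projectiveResolution_X P 0
  refine (isAlmostFlat_iff_lTensor_ker P).2 fun N _ _ => .lTensor_of_forall_cyclic hm ?_ N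
  intro Q _ _ q hq
  exact .lTensor_of_rTensor q.exact_subtype_ker_map hq
    (P.π.f 0).hom.exact_subtype_ker_map (projectiveResolution_π_surjective P)
    (Module.Flat.lTensor_preserves_injective_linearMap _ (Submodule.subtype_injective _))
    (.rTensor_ideal_of_forall_fg h _)

end Flat

section PiRightHom

open TensorProduct

variable {R : Type*} [CommRing R] {ι : Type*} {F : ι → Type*} [∀ i, AddCommGroup (F i)]
  [∀ i, Module R (F i)] {M M' : Type*} [AddCommGroup M] [Module R M] [AddCommGroup M'] [Module R M']

theorem piMap_rTensor_comp_piRightHom (f : M →ₗ[R] M') :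
    LinearMap.piMap (fun i => f.rTensor (F i)) ∘ₗ piRightHom R R M F =
      piRightHom R R M' F ∘ₗ f.rTensor (∀ i, F i) :=
  TensorProduct.ext' fun _ _ => rfl

theorem piRightHom_rTensor_apply (f : M →ₗ[R] M') (x : M ⊗[R] (∀ i, F i)) (i : ι) :
    piRightHom R R M' F (f.rTensor (∀ i, F i) x) i = f.rTensor (F i) (piRightHom R R M F x i) :=
  congrFun (LinearMap.congr_fun (piMap_rTensor_comp_piRightHom f).symm x) i

theorem piRightHom_pi_bijective (κ : Type*) [Finite κ] :
    Function.Bijective (piRightHom R R (κ → R) F) := by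
  classical
  have := Fintype.ofFinite κ
  let e (i : ι) : (κ → R) ⊗[R] F i ≃ₗ[R] (κ → F i) :=
    TensorProduct.comm R _ _ ≪≫ₗ piScalarRight R R _ κ
  let ePi : (κ → R) ⊗[R] (∀ i, F i) ≃ₗ[R] (κ → ∀ i, F i) :=
    TensorProduct.comm R _ _ ≪≫ₗ piScalarRight R R _ κ
  have e_piRightHom (x : (κ → R) ⊗[R] (∀ i, F i)) (i : ι) :
      e i (piRightHom R R (κ → R) F x i) = fun k => ePi x k i := by
    induction x with
    | zero => simp only [map_zero, Pi.zero_apply]; rfl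
    | add x y hx hy => simp only [map_add, Pi.add_apply, hx, hy]; rfl
    | tmul a x => rfl
  convert ((ePi.toEquiv.trans (Equiv.piComm _)).trans
    (Equiv.piCongrRight fun i => (e i).symm.toEquiv)).bijective using 1
  exact funext₂ fun x i => (e i).eq_symm_apply.2 (e_piRightHom x i)

theorem piRightHom_injective_of_finitePresentation [Module.FinitePresentation R M] :
    Function.Injective (piRightHom R R M F) := by
  obtain ⟨n, k, f, g, hf, hgf⟩ := Module.FinitePresentation.exists_fin' R M
  refine (injective_iff_map_eq_zero _).2 fun z hz => ?_
  obtain ⟨x, rfl⟩ := f.rTensor_surjective _ hf z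
  have mem_range (i : ι) : ∃ y, g.rTensor (F i) y = piRightHom R R (Fin n → R) F x i :=
    (rTensor_exact (F i) hgf hf _).1 <| by rw [← piRightHom_rTensor_apply, hz, Pi.zero_apply]
  choose y hy using mem_range
  obtain ⟨w, rfl⟩ := (piRightHom_pi_bijective (Fin k)).2 y
  have hx : x = g.rTensor _ w := (piRightHom_pi_bijective (Fin n)).1 <|
    funext fun i => by rw [piRightHom_rTensor_apply, hy]
  rw [hx, (rTensor_exact _ hgf hf).apply_apply_eq_zero]

theorem rid_piRightHom_rTensor_mem_range {N N' : Type*} [AddCommMonoid N] [Module R N]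
    [AddCommMonoid N'] [Module R N'] (f : N →ₗ[R] N') (x : N ⊗[R] (ι → R)) (i : ι) :
    TensorProduct.rid R N' (piRightHom R R N' (fun _ => R) (f.rTensor (ι → R) x) i) ∈
      LinearMap.range f := by
  induction x with
  | zero => simp only [map_zero, Pi.zero_apply, zero_mem]
  | add x y hx hy => simpa only [map_add, Pi.add_apply] using add_mem hx hy
  | tmul a y => exact ⟨y i • a, map_smul f (y i) a⟩

theorem exists_fg_smul_mem_of_mem_annihilator_ker_piRightHom {κ : Type*} [Finite κ]
    {φ : (κ → R) →ₗ[R] M} (hφ : Function.Surjective φ) {t : R}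
    (ht : t ∈ (LinearMap.ker (piRightHom R R M fun _ : LinearMap.ker φ => R)).annihilator) :
    ∃ L ≤ LinearMap.ker φ, L.FG ∧ ∀ v ∈ LinearMap.ker φ, t • v ∈ L := by
  -- `ξ` collects all the relations `v ∈ ker φ` in a single tensor.
  obtain ⟨ξ, hξ⟩ := (piRightHom_pi_bijective (F := fun _ : LinearMap.ker φ => R) κ).2
    fun v => v.1 ⊗ₜ 1
  have φξ_mem_ker : φ.rTensor _ ξ ∈ LinearMap.ker (piRightHom R R M fun _ : LinearMap.ker φ => R) :=
    funext fun v => by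
      rw [piRightHom_rTensor_apply, hξ, LinearMap.rTensor_tmul, v.2, zero_tmul, Pi.zero_apply]
  obtain ⟨η, hη⟩ := (rTensor_exact (LinearMap.ker φ → R) φ.exact_subtype_ker_map hφ (t • ξ)).1 <| by
    rw [map_smul]
    exact Submodule.mem_annihilator.1 ht _ φξ_mem_ker
  obtain ⟨L, hL, ζ, rfl⟩ := Submodule.exists_fg_le_eq_rTensor_subtype η
  let j : L →ₗ[R] (κ → R) := (LinearMap.ker φ).subtype ∘ₗ L.subtype
  have hζ : j.rTensor (LinearMap.ker φ → R) ζ = t • ξ := by rw [← hη, LinearMap.rTensor_comp_apply]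
  refine ⟨LinearMap.range j, ?_, ?_, fun v hv => ?_⟩
  · rintro _ ⟨l, rfl⟩
    exact l.1.2
  · have : Module.Finite R L := Module.Finite.iff_fg.2 hL
    exact Module.Finite.iff_fg.1 inferInstance
  · have mem_range := rid_piRightHom_rTensor_mem_range (ι := LinearMap.ker φ) j ζ ⟨v, hv⟩
    rwa [hζ, map_smul, hξ, Pi.smul_apply, map_smul, TensorProduct.rid_tmul, one_smul] at mem_range

end PiRightHom

section AlmostCoherent

open TensorProduct

variable {R : Type u} [CommRing R] {m : Ideal R} {M : Type u} [AddCommGroup M] [Module R M]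

theorem IsAlmostFP.exists_factorization (h : IsAlmostFP m M) {s t : R} (hs : s ∈ m) (ht : t ∈ m) :
    ∃ (C : Type u) (_ : AddCommGroup C) (_ : Module R C) (u : C →ₗ[R] M) (v : M →ₗ[R] C),
      Module.FinitePresentation R C ∧ u ∘ₗ v = (t * s) • LinearMap.id := by
  obtain ⟨n, k, g, f, hfg, hf, hg⟩ := h s hs t ht
  let C := (Fin n → R) ⧸ LinearMap.range g
  let u : C →ₗ[R] M := (LinearMap.range g).liftQ f (LinearMap.range_le_ker_iff.2 hfg)
  let w : ((Fin n → R) ⧸ LinearMap.ker f) →ₗ[R] C :=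
    (LinearMap.ker f).liftQ (t • (LinearMap.range g).mkQ) fun x hx =>
      (Submodule.Quotient.mk_eq_zero _).2 (hg x hx)
  let v : M →ₗ[R] C :=
    w ∘ₗ f.quotKerEquivRange.symm ∘ₗ (s • LinearMap.id).codRestrict (LinearMap.range f) hf
  have u_w (x : LinearMap.range f) : u (w (f.quotKerEquivRange.symm x)) = t • (x : M) := by
    obtain ⟨q, rfl⟩ := f.quotKerEquivRange.surjective x
    obtain ⟨a, rfl⟩ := Submodule.mkQ_surjective _ q
    rw [LinearEquiv.symm_apply_apply]
    exact map_smul f t a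
  refine ⟨C, _, _, u, v, Module.finitePresentation_of_surjective _ (Submodule.mkQ_surjective _) ?_,
    LinearMap.ext fun x => ?_⟩
  · rw [Submodule.ker_mkQ]
    exact Module.Finite.iff_fg.1 inferInstance
  · exact (u_w _).trans (smul_smul t s x)

theorem IsAlmostFP.isAlmostInjective_piRightHom (hm : m * m = m) (h : IsAlmostFP m M) {ι : Type*}
    (F : ι → Type*) [∀ i, AddCommGroup (F i)] [∀ i, Module R (F i)] :
    IsAlmostInjective m (piRightHom R R M F) := by
  refine .of_mul_smul_eq_zero hm fun t ht s hs x hx => ?_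
  obtain ⟨C, _, _, u, v, _, huv⟩ := h.exists_factorization hs ht
  have hvx : v.rTensor (∀ i, F i) x = 0 := piRightHom_injective_of_finitePresentation <|
    funext fun i => by simp [piRightHom_rTensor_apply, hx]
  have key : u.rTensor (∀ i, F i) (v.rTensor (∀ i, F i) x) = (t * s) • x := by
    rw [← LinearMap.rTensor_comp_apply, huv, LinearMap.rTensor_smul, LinearMap.rTensor_id,
      LinearMap.smul_apply, LinearMap.id_apply]
  rw [← key, hvx, map_zero]

theorem isAlmostFG_of_finite [Module.Finite R M] : IsAlmostFG m M := fun s _ => by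
  obtain ⟨n, f, hf⟩ := Module.Finite.exists_fin' R M
  exact ⟨n, f, fun y => hf (s • y)⟩

theorem IsAlmostCoherent.isAlmostFlat_pi (hm : m * m = m) (h : IsAlmostCoherent m) {ι : Type u}
    {F : ι → Type u} [∀ i, AddCommGroup (F i)] [∀ i, Module R (F i)]
    (hF : ∀ i, IsAlmostFlat m (F i)) : IsAlmostFlat m (∀ i, F i) := by
  refine (isAlmostFlat_iff_rTensor_fg_ideal hm).2 fun I hI => ?_
  have : Module.Finite R I := Module.Finite.iff_fg.2 hI
  have almostInjective_piMap :
      IsAlmostInjective m (LinearMap.piMap fun i => I.subtype.rTensor (F i)) :=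
    .piMap fun i => (isAlmostFlat_iff_rTensor_fg_ideal hm).1 (hF i) I hI
  have h_comp := almostInjective_piMap.comp hm
    ((h I isAlmostFG_of_finite).isAlmostInjective_piRightHom hm F)
  rw [piMap_rTensor_comp_piRightHom] at h_comp
  exact h_comp.of_comp

theorem IsAlmostFlat.isAlmostInjective_piRightHom {ι : Type u} {F : ι → Type u}
    [∀ i, AddCommGroup (F i)] [∀ i, Module R (F i)] (h : IsAlmostFlat m (∀ i, F i))
    {M' : Type u} [AddCommGroup M'] [Module R M'] [Module.FinitePresentation R M']
    {f : M →ₗ[R] M'} (hf : Function.Injective f) : IsAlmostInjective m (piRightHom R R M F) := by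
  have h_comp : IsAlmostInjective m (piRightHom R R M' F ∘ₗ f.rTensor (∀ i, F i)) :=
    .injective_comp piRightHom_injective_of_finitePresentation
      (isAlmostFlat_iff_rTensor_of_injective.1 h _ _ f hf)
  rw [← piMap_rTensor_comp_piRightHom] at h_comp
  exact h_comp.of_comp

theorem isAlmostCoherent_of_isAlmostFlat_pi (h : ∀ ι : Type u, IsAlmostFlat m (ι → R)) :
    IsAlmostCoherent m := by
  intro I hI s hs t ht
  obtain ⟨n, f, hf⟩ := hI s hs
  let J : Ideal R := LinearMap.range (I.subtype ∘ₗ f)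
  let φ : (Fin n → R) →ₗ[R] J := (I.subtype ∘ₗ f).rangeRestrict
  have ker_φ : LinearMap.ker φ = LinearMap.ker f := by
    rw [LinearMap.ker_rangeRestrict, LinearMap.ker_comp_of_ker_eq_bot _ I.ker_subtype]
  have ht_ann : t ∈
      (LinearMap.ker (piRightHom R R J fun _ : LinearMap.ker φ => R)).annihilator :=
    (h (LinearMap.ker φ)).isAlmostInjective_piRightHom J.subtype_injective ht
  obtain ⟨L, hL_le, hL_fg, hL⟩ := exists_fg_smul_mem_of_mem_annihilator_ker_piRightHom
    (LinearMap.surjective_rangeRestrict _) ht_ann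
  obtain ⟨k, g, rfl⟩ := (Submodule.fg_iff_exists_fin_linearMap R _).1 hL_fg
  rw [ker_φ] at hL_le hL
  exact ⟨n, k, g, f, LinearMap.range_le_ker_iff.1 hL_le, hf, hL⟩

end AlmostCoherent

/-- `R` is almost coherent iff products of almost flat (resp. flat,
projective, copies of `R`) modules are almost flat. -/
theorem almostCoherent_iff_products_almostFlat
    {R : Type u} [CommRing R] (m : Ideal R) (hm : m * m = m) :
    -- (1) ↔ (2)
    ((IsAlmostCoherent m ↔
      (∀ (ι : Type u) (F : ι → Type u) [∀ i, AddCommGroup (F i)] [∀ i, Module R (F i)],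
        (∀ i, IsAlmostFlat m (F i)) → IsAlmostFlat m (∀ i, F i))) ∧
    -- (1) ↔ (3)
    (IsAlmostCoherent m ↔
      (∀ (ι : Type u) (F : ι → Type u) [∀ i, AddCommGroup (F i)] [∀ i, Module R (F i)],
        (∀ i, Module.Flat R (F i)) → IsAlmostFlat m (∀ i, F i))) ∧
    -- (1) ↔ (4)
    (IsAlmostCoherent m ↔
      (∀ (ι : Type u) (F : ι → Type u) [∀ i, AddCommGroup (F i)] [∀ i, Module R (F i)],
        (∀ i, Module.Projective R (F i)) → IsAlmostFlat m (∀ i, F i))) ∧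
    -- (1) ↔ (5)
    (IsAlmostCoherent m ↔ (∀ ι : Type u, IsAlmostFlat m (ι → R)))) := by
  have pi_of_almostFlat (h : IsAlmostCoherent m) (ι : Type u) (F : ι → Type u)
      [∀ i, AddCommGroup (F i)] [∀ i, Module R (F i)] (hF : ∀ i, IsAlmostFlat m (F i)) :
      IsAlmostFlat m (∀ i, F i) :=
    h.isAlmostFlat_pi hm hF
  have pi_of_flat (h : IsAlmostCoherent m) (ι : Type u) (F : ι → Type u)
      [∀ i, AddCommGroup (F i)] [∀ i, Module R (F i)] (_ : ∀ i, Module.Flat R (F i)) :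
      IsAlmostFlat m (∀ i, F i) :=
    h.isAlmostFlat_pi hm fun _ => isAlmostFlat_of_flat
  refine ⟨⟨pi_of_almostFlat, fun h => ?_⟩, ⟨pi_of_flat, fun h => ?_⟩,
    ⟨fun h ι F _ _ _ => pi_of_flat h ι F inferInstance, fun h => ?_⟩,
    ⟨fun h ι => pi_of_flat h ι _ inferInstance, isAlmostCoherent_of_isAlmostFlat_pi⟩⟩
  · exact isAlmostCoherent_of_isAlmostFlat_pi fun ι => h ι _ fun _ => isAlmostFlat_of_flat
  · exact isAlmostCoherent_of_isAlmostFlat_pi fun ι => h ι _ inferInstance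
  · exact isAlmostCoherent_of_isAlmostFlat_pi fun ι => h ι _ inferInstance
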